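/- arXiv:2208.11763 — 2 statements merged into one kernel-verified Lean document; each statement's English description precedes it below -/
import Mathlib

section
/- Let n = 2m and let τ_{2m} : ℂCl(2m) → End_ℂ(⋀W_m) be the spinor representation, τ_{2m}(u + v̄) = √2 ε(u) − √2 ι(v̄). Then the even and odd parts 𝕊⁺_{2m} = ⋀^{even}W_m and 𝕊⁻_{2m} = ⋀^{odd}W_m are invariant under τ_{2m}(a) for every a in the even subalgebra ℂCl⁰(2m); each of 𝕊⁺_{2m} and 𝕊⁻_{2m} is a simple module over ℂCl⁰(2m); and 𝕊⁺_{2m} and 𝕊⁻_{2m} are not isomorphic as ℂCl⁰(2m)-modules. -/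
set_option synthInstance.maxHeartbeats 1000000
set_option maxHeartbeats 1000000

noncomputable section

open Complex

/-- The quadratic form `Q(x) = -(x₁² + ⋯ + x_n²)` on `ℂⁿ`. -/
def Qc (n : ℕ) : QuadraticForm ℂ (Fin n → ℂ) :=
  QuadraticMap.weightedSumSquares ℂ (fun _ : Fin n => (-1 : ℂ))

/-- The isotropic vector `f_j = (e_{2j-1} + i e_{2j})/√2` (0-indexed: coords `2j`, `2j+1`). -/
def fvec (n j : ℕ) : Fin n → ℂ := fun i =>
  if (i : ℕ) = 2 * j then ((Real.sqrt 2 : ℂ))⁻¹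
  else if (i : ℕ) = 2 * j + 1 then Complex.I * ((Real.sqrt 2 : ℂ))⁻¹
  else 0

/-- The isotropic vector `f̄_j = -(e_{2j-1} - i e_{2j})/√2`. -/
def fbarvec (n j : ℕ) : Fin n → ℂ := fun i =>
  if (i : ℕ) = 2 * j then -((Real.sqrt 2 : ℂ))⁻¹
  else if (i : ℕ) = 2 * j + 1 then Complex.I * ((Real.sqrt 2 : ℂ))⁻¹
  else 0

/-- The standard basis vector `e` with a `1` in (0-indexed) coordinate `j`. -/
def evec (n j : ℕ) : Fin n → ℂ := fun i => if (i : ℕ) = j then 1 else 0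

/-- The maximal isotropic subspace `W = span(f₁, …, f_m)` of `ℂⁿ`. -/
def Wsub (n m : ℕ) : Submodule ℂ (Fin n → ℂ) :=
  Submodule.span ℂ (Set.range fun j : Fin m => fvec n j)

/-- `W̄ = span(f̄₁, …, f̄_m)`. -/
def Wbarsub (n m : ℕ) : Submodule ℂ (Fin n → ℂ) :=
  Submodule.span ℂ (Set.range fun j : Fin m => fbarvec n j)

/-- The Dirac spinor space `𝕊 = ⋀ W`. -/
abbrev Spinor (n m : ℕ) := ExteriorAlgebra ℂ (Wsub n m)

/-- The bilinear extension `⟨v, ·⟩ = Σ_i v_i (·)_i` of the standard inner product,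
as a linear functional. -/
def pairingLin (n : ℕ) (v : Fin n → ℂ) : (Fin n → ℂ) →ₗ[ℂ] ℂ :=
  ∑ i, v i • (LinearMap.proj i : (Fin n → ℂ) →ₗ[ℂ] ℂ)

/-- Exterior multiplication `ε(u)` by `u ∈ W` on `⋀ W`. -/
def extMul (n m : ℕ) (u : Wsub n m) : Module.End ℂ (Spinor n m) :=
  LinearMap.mulLeft ℂ (ExteriorAlgebra.ι ℂ u)

/-- Interior multiplication (contraction) `ι(v̄)` on `⋀ W` by `v̄ ∈ ℂⁿ`, with respect to the
pairing `⟨v̄, u⟩`; it is the unique degree `-1` antiderivation with `ι(v̄) u = ⟨v̄, u⟩` on `W`. -/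
def intMul (n m : ℕ) (v : Fin n → ℂ) : Module.End ℂ (Spinor n m) :=
  CliffordAlgebra.contractLeft (Q := (0 : QuadraticForm ℂ (Wsub n m)))
    ((pairingLin n v).comp (Wsub n m).subtype)

/-- The parity operator `γ`, acting by `(-1)^k` on `⋀^k W`. -/
def parity (n m : ℕ) : Module.End ℂ (Spinor n m) :=
  (CliffordAlgebra.involute (Q := (0 : QuadraticForm ℂ (Wsub n m)))).toLinearMap

/-- `γ` as a linear equivalence (it is an involution). -/
def parityEquiv (n m : ℕ) : Spinor n m ≃ₗ[ℂ] Spinor n m :=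
  LinearEquiv.ofInvolutive (parity n m) (fun x => CliffordAlgebra.involute_involute x)

/-- The even part `𝕊⁺ = ⋀^{even} W`. -/
def SpinorEven (n m : ℕ) : Submodule ℂ (Spinor n m) :=
  CliffordAlgebra.evenOdd (0 : QuadraticForm ℂ (Wsub n m)) 0

/-- The odd part `𝕊⁻ = ⋀^{odd} W`. -/
def SpinorOdd (n m : ℕ) : Submodule ℂ (Spinor n m) :=
  CliffordAlgebra.evenOdd (0 : QuadraticForm ℂ (Wsub n m)) 1

section HalfSpinAux

open CliffordAlgebra

variable {m : ℕ} {M : Type} [AddCommGroup M] [Module ℂ M]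

/-- `d_j ∘ ε(f_j)`. -/
def vacOp (f : Fin m → M) (d : Fin m → Module.Dual ℂ M) (j : Fin m) :
    Module.End ℂ (ExteriorAlgebra ℂ M) :=
  (contractLeft (Q := (0 : QuadraticForm ℂ M)) (d j)).comp
    (LinearMap.mulLeft ℂ (ExteriorAlgebra.ι ℂ (f j)))

/-- Product of the `vacOp`s along a list. -/
def vacList (f : Fin m → M) (d : Fin m → Module.Dual ℂ M) (L : List (Fin m)) :
    Module.End ℂ (ExteriorAlgebra ℂ M) := (L.map (vacOp f d)).prod

lemma vacOp_apply (f : Fin m → M) (d : Fin m → Module.Dual ℂ M) (j : Fin m)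
    (x : ExteriorAlgebra ℂ M) :
    vacOp f d j x = d j (f j) • x - ExteriorAlgebra.ι ℂ (f j) *
      contractLeft (Q := (0 : QuadraticForm ℂ M)) (d j) x := by
  simp only [vacOp, LinearMap.comp_apply, LinearMap.mulLeft_apply]
  exact contractLeft_ι_mul _ _ _

lemma vacOp_mul_self (f : Fin m → M) (d : Fin m → Module.Dual ℂ M) (j : Fin m)
    (x : ExteriorAlgebra ℂ M) :
    vacOp f d j (ExteriorAlgebra.ι ℂ (f j) * x) = 0 := by
  simp only [vacOp, LinearMap.comp_apply, LinearMap.mulLeft_apply]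
  rw [← mul_assoc, ExteriorAlgebra.ι_sq_zero, zero_mul, map_zero]

lemma vacOp_mul_ne (f : Fin m → M) (d : Fin m → Module.Dual ℂ M) (i j : Fin m)
    (h : d i (f j) = 0) (x : ExteriorAlgebra ℂ M) :
    vacOp f d i (ExteriorAlgebra.ι ℂ (f j) * x) = ExteriorAlgebra.ι ℂ (f j) * vacOp f d i x := by
  rw [vacOp_apply, vacOp_apply]
  have h1 : contractLeft (Q := (0 : QuadraticForm ℂ M)) (d i) (ExteriorAlgebra.ι ℂ (f j) * x)
      = d i (f j) • x - ExteriorAlgebra.ι ℂ (f j) *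
      contractLeft (Q := (0 : QuadraticForm ℂ M)) (d i) x := contractLeft_ι_mul _ _ _
  rw [h1, h, zero_smul, zero_sub, mul_neg, ← mul_assoc, mul_sub, ← mul_assoc,
    mul_smul_comm, eq_neg_of_add_eq_zero_left (ExteriorAlgebra.ι_add_mul_swap (f i) (f j)),
    neg_mul, neg_neg]

lemma vacList_mul (f : Fin m → M) (d : Fin m → Module.Dual ℂ M)
    (hd : ∀ i j, d i (f j) = if i = j then 1 else 0) (j : Fin m) (L : List (Fin m)) (hj : j ∈ L)
    (x : ExteriorAlgebra ℂ M) :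
    vacList f d L (ExteriorAlgebra.ι ℂ (f j) * x) = 0 := by
  have key : ∀ L : List (Fin m), j ∉ L → ∀ x, vacList f d L (ExteriorAlgebra.ι ℂ (f j) * x)
      = ExteriorAlgebra.ι ℂ (f j) * vacList f d L x := by
    intro L
    induction L with
    | nil => intro _ x; simp [vacList]
    | cons k L ih =>
      intro hk x
      simp only [List.mem_cons, not_or] at hk
      have := ih hk.2 x
      simp only [vacList, List.map_cons, List.prod_cons, Module.End.mul_apply] at this ⊢
      rw [this, vacOp_mul_ne]
      rw [hd, if_neg (Ne.symm hk.1)]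
  induction L with
  | nil => simp at hj
  | cons k L ih =>
    by_cases h : j ∈ L
    · have := ih h
      simp only [vacList, List.map_cons, List.prod_cons, Module.End.mul_apply] at this ⊢
      rw [this, map_zero]
    · have hk : j = k := by
        rcases List.mem_cons.1 hj with h' | h'
        · exact h'
        · exact absurd h' h
      subst hk
      have := key L h x
      simp only [vacList, List.map_cons, List.prod_cons, Module.End.mul_apply] at this ⊢
      rw [this, vacOp_mul_self]

lemma vacList_fix (f : Fin m → M) (d : Fin m → Module.Dual ℂ M)
    (hd : ∀ i j, d i (f j) = if i = j then 1 else 0) (L : List (Fin m))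
    (x : ExteriorAlgebra ℂ M)
    (hx : ∀ j, contractLeft (Q := (0 : QuadraticForm ℂ M)) (d j) x = 0) :
    vacList f d L x = x := by
  induction L with
  | nil => simp [vacList]
  | cons k L ih =>
    simp only [vacList, List.map_cons, List.prod_cons, Module.End.mul_apply] at ih ⊢
    rw [ih, vacOp_apply, hx, hd]; simp

lemma vacList_ι_mul (f : Fin m → M) (d : Fin m → Module.Dual ℂ M)
    (hf : Submodule.span ℂ (Set.range f) = ⊤)
    (hd : ∀ i j, d i (f j) = if i = j then 1 else 0) (w : M) (x : ExteriorAlgebra ℂ M) :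
    vacList f d (List.finRange m) (ExteriorAlgebra.ι ℂ w * x) = 0 := by
  have hw : w ∈ Submodule.span ℂ (Set.range f) := hf ▸ Submodule.mem_top
  induction hw using Submodule.span_induction with
  | mem w h =>
    obtain ⟨j, rfl⟩ := h
    exact vacList_mul f d hd j _ (List.mem_finRange j) x
  | zero => simp
  | add a b _ _ ha hb => rw [map_add, add_mul, map_add, ha, hb, add_zero]
  | smul c a _ ha => rw [map_smul, smul_mul_assoc, map_smul, ha, smul_zero]

lemma vacList_one (f : Fin m → M) (d : Fin m → Module.Dual ℂ M)
    (hd : ∀ i j, d i (f j) = if i = j then 1 else 0) (L : List (Fin m)) :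
    vacList f d L 1 = 1 :=
  vacList_fix f d hd L 1 (fun _ => contractLeft_one _ _)

lemma vacList_scalar (f : Fin m → M) (d : Fin m → Module.Dual ℂ M)
    (hf : Submodule.span ℂ (Set.range f) = ⊤)
    (hd : ∀ i j, d i (f j) = if i = j then 1 else 0) (x : ExteriorAlgebra ℂ M) :
    ∃ c : ℂ, vacList f d (List.finRange m) x = c • 1 := by
  induction x using CliffordAlgebra.left_induction with
  | algebraMap r =>
    exact ⟨r, by rw [Algebra.algebraMap_eq_smul_one, map_smul, vacList_one f d hd]⟩
  | add x y hx hy =>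
    obtain ⟨a, ha⟩ := hx
    obtain ⟨b, hb⟩ := hy
    exact ⟨a + b, by rw [map_add, ha, hb, add_smul]⟩
  | ι_mul x w _ => exact ⟨0, by rw [zero_smul]; exact vacList_ι_mul f d hf hd w x⟩

lemma vacList_odd (f : Fin m → M) (d : Fin m → Module.Dual ℂ M)
    (hf : Submodule.span ℂ (Set.range f) = ⊤)
    (hd : ∀ i j, d i (f j) = if i = j then 1 else 0) (x : ExteriorAlgebra ℂ M)
    (hx : x ∈ evenOdd (0 : QuadraticForm ℂ M) 1) :
    vacList f d (List.finRange m) x = 0 := by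
  induction x, hx using CliffordAlgebra.odd_induction with
  | ι v => simpa using vacList_ι_mul f d hf hd v 1
  | add x y _ _ hx hy => rw [map_add, hx, hy, add_zero]
  | ι_mul_ι_mul a b x _ _ => rw [mul_assoc]; exact vacList_ι_mul f d hf hd a _

lemma exists_killed (d : Fin m → Module.Dual ℂ M)
    (U : Submodule ℂ (ExteriorAlgebra ℂ M))
    (hc : ∀ j, ∀ x ∈ U, contractLeft (Q := (0 : QuadraticForm ℂ M)) (d j) x ∈ U)
    (x : ExteriorAlgebra ℂ M) (hxU : x ∈ U) (hx : x ≠ 0) (L : List (Fin m)) :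
    ∃ y ∈ U, y ≠ 0 ∧ ∀ j ∈ L, contractLeft (Q := (0 : QuadraticForm ℂ M)) (d j) y = 0 := by
  induction L with
  | nil => exact ⟨x, hxU, hx, by simp⟩
  | cons k L ih =>
    obtain ⟨y, hyU, hy, hL⟩ := ih
    by_cases h : contractLeft (Q := (0 : QuadraticForm ℂ M)) (d k) y = 0
    · refine ⟨y, hyU, hy, fun j hj => ?_⟩
      rcases List.mem_cons.1 hj with rfl | hj
      · exact h
      · exact hL j hj
    · refine ⟨_, hc k y hyU, h, fun j hj => ?_⟩
      rcases List.mem_cons.1 hj with rfl | hj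
      · exact contractLeft_contractLeft _ _
      · rw [contractLeft_comm, hL j hj, map_zero, neg_zero]

lemma ext_irred (f : Fin m → M) (d : Fin m → Module.Dual ℂ M)
    (hf : Submodule.span ℂ (Set.range f) = ⊤)
    (hd : ∀ i j, d i (f j) = if i = j then 1 else 0)
    (U : Submodule ℂ (ExteriorAlgebra ℂ M))
    (hm : ∀ w, ∀ x ∈ U, ExteriorAlgebra.ι ℂ w * x ∈ U)
    (hc : ∀ j, ∀ x ∈ U, contractLeft (Q := (0 : QuadraticForm ℂ M)) (d j) x ∈ U) :
    U = ⊥ ∨ U = ⊤ := by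
  by_cases hU : U = ⊥
  · exact Or.inl hU
  right
  obtain ⟨x, hxU, hx⟩ := Submodule.exists_mem_ne_zero_of_ne_bot hU
  obtain ⟨y, hyU, hy, hL⟩ := exists_killed d U hc x hxU hx (List.finRange m)
  obtain ⟨c, hcc⟩ := vacList_scalar f d hf hd y
  rw [vacList_fix f d hd _ y (fun j => hL j (List.mem_finRange j))] at hcc
  have hc0 : c ≠ 0 := by rintro rfl; exact hy (by rw [hcc, zero_smul])
  have h1 : (1 : ExteriorAlgebra ℂ M) ∈ U := by
    have := U.smul_mem c⁻¹ hyU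
    rwa [hcc, smul_smul, inv_mul_cancel₀ hc0, one_smul] at this
  rw [eq_top_iff]
  rintro z -
  induction z using CliffordAlgebra.left_induction with
  | algebraMap r => rw [Algebra.algebraMap_eq_smul_one]; exact U.smul_mem _ h1
  | add x y hx hy => exact U.add_mem hx hy
  | ι_mul x w h => exact hm w x h

lemma contract_parity (d : Module.Dual ℂ M) (i : ZMod 2) (x : ExteriorAlgebra ℂ M)
    (hx : x ∈ evenOdd (0 : QuadraticForm ℂ M) i) :
    contractLeft (Q := (0 : QuadraticForm ℂ M)) d x ∈ evenOdd (0 : QuadraticForm ℂ M) (i + 1) := by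
  have hstep : ∀ (i : ZMod 2) (a b : M) (x : ExteriorAlgebra ℂ M),
      x ∈ evenOdd (0 : QuadraticForm ℂ M) i →
      contractLeft (Q := (0 : QuadraticForm ℂ M)) d x ∈
        evenOdd (0 : QuadraticForm ℂ M) (i + 1) →
      contractLeft (Q := (0 : QuadraticForm ℂ M)) d (ι _ a * ι _ b * x) ∈
        evenOdd (0 : QuadraticForm ℂ M) (i + 1) := by
    intro i a b x hx h
    rw [mul_assoc, contractLeft_ι_mul, contractLeft_ι_mul, mul_sub, ← mul_assoc, mul_smul_comm]
    have e1 : ∀ a : M, ι (0 : QuadraticForm ℂ M) a * x ∈ evenOdd (0 : QuadraticForm ℂ M) (i+1) := by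
      intro a
      rw [add_comm]
      exact SetLike.mul_mem_graded (ι_mem_evenOdd_one _ a) hx
    refine Submodule.sub_mem _ (Submodule.smul_mem _ _ (e1 b))
      (Submodule.sub_mem _ (Submodule.smul_mem _ _ (e1 a)) ?_)
    have := SetLike.mul_mem_graded (ι_mul_ι_mem_evenOdd_zero (0 : QuadraticForm ℂ M) a b) h
    rwa [zero_add] at this
  have hi : i = 0 ∨ i = 1 := (by decide : ∀ i : ZMod 2, i = 0 ∨ i = 1) i
  rcases hi with rfl | rfl
  · induction x, hx using CliffordAlgebra.even_induction with
    | algebraMap r => rw [contractLeft_algebraMap]; exact Submodule.zero_mem _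
    | add x y _ _ hx hy => rw [map_add]; exact Submodule.add_mem _ hx hy
    | ι_mul_ι_mul a b x hx h => exact hstep 0 a b x hx h
  · induction x, hx using CliffordAlgebra.odd_induction with
    | ι v =>
      rw [contractLeft_ι]
      exact SetLike.algebraMap_mem_graded (evenOdd (0 : QuadraticForm ℂ M)) _
    | add x y _ _ hx hy => rw [map_add]; exact Submodule.add_mem _ hx hy
    | ι_mul_ι_mul a b x hx h => exact hstep 1 a b x hx h

lemma parity_disjoint (i : ZMod 2) (x : ExteriorAlgebra ℂ M)
    (hx : x ∈ evenOdd (0 : QuadraticForm ℂ M) i)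
    (hx' : x ∈ evenOdd (0 : QuadraticForm ℂ M) (i + 1)) : x = 0 := by
  have h := (evenOdd_isCompl (0 : QuadraticForm ℂ M)).disjoint
  have hi : i = 0 ∨ i = 1 := (by decide : ∀ i : ZMod 2, i = 0 ∨ i = 1) i
  rcases hi with rfl | rfl
  · exact Submodule.disjoint_def.1 h x hx hx'
  · exact Submodule.disjoint_def.1 h x hx' hx

/-- Simplicity of each half. -/
lemma half_simple {V : Type} [AddCommGroup V] [Module ℂ V] {Q : QuadraticForm ℂ V}
    (f : Fin m → M) (d : Fin m → Module.Dual ℂ M)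
    (hf : Submodule.span ℂ (Set.range f) = ⊤)
    (hd : ∀ i j, d i (f j) = if i = j then 1 else 0)
    (τ : CliffordAlgebra Q →ₐ[ℂ] Module.End ℂ (ExteriorAlgebra ℂ M))
    (hpar : ∀ (v : V) (i : ZMod 2), ∀ x ∈ evenOdd (0 : QuadraticForm ℂ M) i,
      τ (ι Q v) x ∈ evenOdd (0 : QuadraticForm ℂ M) (i + 1))
    (hm : ∀ w : M, ∃ v : V, ∀ x, τ (ι Q v) x = ExteriorAlgebra.ι ℂ w * x)
    (hc : ∀ j, ∃ v : V, ∀ x, τ (ι Q v) x = contractLeft (Q := (0 : QuadraticForm ℂ M)) (d j) x)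
    (i : ZMod 2) (U : Submodule ℂ (ExteriorAlgebra ℂ M))
    (hU : U ≤ evenOdd (0 : QuadraticForm ℂ M) i)
    (hinv : ∀ a ∈ evenOdd Q 0, ∀ x ∈ U, τ a x ∈ U) :
    U = ⊥ ∨ U = evenOdd (0 : QuadraticForm ℂ M) i := by
  let O : Submodule ℂ (ExteriorAlgebra ℂ M) :=
    Submodule.span ℂ {y | ∃ v : V, ∃ x ∈ U, y = τ (ι Q v) x}
  have hO : O ≤ evenOdd (0 : QuadraticForm ℂ M) (i + 1) := by
    refine Submodule.span_le.2 ?_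
    rintro y ⟨v, x, hx, rfl⟩
    exact hpar v i x (hU hx)
  have hstab : ∀ v : V, ∀ x ∈ U ⊔ O, τ (ι Q v) x ∈ U ⊔ O := by
    intro v
    change U ⊔ O ≤ (U ⊔ O).comap (τ (ι Q v))
    refine sup_le (fun x hx => ?_) (Submodule.span_le.2 ?_)
    · exact Submodule.mem_sup_right (Submodule.subset_span ⟨v, x, hx, rfl⟩)
    · rintro y ⟨w, x, hx, rfl⟩
      refine Submodule.mem_sup_left ?_
      have := hinv _ (ι_mul_ι_mem_evenOdd_zero Q v w) x hx
      rwa [map_mul, Module.End.mul_apply] at this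
  rcases ext_irred f d hf hd (U ⊔ O)
    (fun w x hx => by obtain ⟨v, hv⟩ := hm w; rw [← hv]; exact hstab v x hx)
    (fun j x hx => by obtain ⟨v, hv⟩ := hc j; rw [← hv]; exact hstab v x hx) with h | h
  · left; exact (sup_eq_bot_iff.1 h).1
  · right
    refine le_antisymm hU (fun x hx => ?_)
    have hx' : x ∈ U ⊔ O := h ▸ Submodule.mem_top
    obtain ⟨u, hu, o, ho, rfl⟩ := Submodule.mem_sup.1 hx'
    have ho' : o ∈ evenOdd (0 : QuadraticForm ℂ M) i := by
      have := Submodule.sub_mem _ hx (hU hu)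
      rwa [add_sub_cancel_left] at this
    rw [parity_disjoint i o ho' (hO ho), add_zero]
    exact hu

lemma half_invariant {V : Type} [AddCommGroup V] [Module ℂ V] {Q : QuadraticForm ℂ V}
    (τ : CliffordAlgebra Q →ₐ[ℂ] Module.End ℂ (ExteriorAlgebra ℂ M))
    (hpar : ∀ (v : V) (i : ZMod 2), ∀ x ∈ evenOdd (0 : QuadraticForm ℂ M) i,
      τ (ι Q v) x ∈ evenOdd (0 : QuadraticForm ℂ M) (i + 1))
    (i : ZMod 2) (a : CliffordAlgebra Q) (ha : a ∈ evenOdd Q 0) (x : ExteriorAlgebra ℂ M)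
    (hx : x ∈ evenOdd (0 : QuadraticForm ℂ M) i) :
    τ a x ∈ evenOdd (0 : QuadraticForm ℂ M) i := by
  induction a, ha using CliffordAlgebra.even_induction with
  | algebraMap r =>
    rw [AlgHom.commutes, Module.algebraMap_end_apply]
    exact Submodule.smul_mem _ _ hx
  | add a b _ _ ha hb => rw [map_add]; exact Submodule.add_mem _ ha hb
  | ι_mul_ι_mul v w a _ h =>
    rw [map_mul, map_mul, Module.End.mul_apply, Module.End.mul_apply]
    have := hpar v _ _ (hpar w _ _ h)
    rwa [add_assoc, show (1 : ZMod 2) + 1 = 0 from rfl, add_zero] at this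

lemma exists_vac {V : Type} [AddCommGroup V] [Module ℂ V] {Q : QuadraticForm ℂ V}
    (f : Fin m → M) (d : Fin m → Module.Dual ℂ M)
    (τ : CliffordAlgebra Q →ₐ[ℂ] Module.End ℂ (ExteriorAlgebra ℂ M))
    (hm : ∀ w : M, ∃ v : V, ∀ x, τ (ι Q v) x = ExteriorAlgebra.ι ℂ w * x)
    (hc : ∀ j, ∃ v : V, ∀ x, τ (ι Q v) x = contractLeft (Q := (0 : QuadraticForm ℂ M)) (d j) x)
    (L : List (Fin m)) : ∃ a ∈ evenOdd Q 0, τ a = vacList f d L := by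
  induction L with
  | nil => exact ⟨1, SetLike.one_mem_graded _, by simp [vacList]⟩
  | cons k L ih =>
    obtain ⟨a, ha, h⟩ := ih
    obtain ⟨v, hv⟩ := hc k
    obtain ⟨w, hw⟩ := hm (f k)
    refine ⟨ι Q v * ι Q w * a, ?_, ?_⟩
    · have := SetLike.mul_mem_graded (ι_mul_ι_mem_evenOdd_zero Q v w) ha
      rwa [zero_add] at this
    · have : vacList f d (k :: L) = vacOp f d k * vacList f d L := by simp [vacList]
      rw [this, map_mul, h]
      congr 1
      refine LinearMap.ext fun x => ?_
      rw [map_mul, Module.End.mul_apply, hw, hv]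
      rfl

lemma sqrt2_sq : ((Real.sqrt 2 : ℝ) : ℂ) * ((Real.sqrt 2 : ℝ) : ℂ) = 2 := by
  rw [← Complex.ofReal_mul, Real.mul_self_sqrt (by norm_num)]; norm_num

lemma sqrt2_ne : ((Real.sqrt 2 : ℝ) : ℂ) ≠ 0 := by
  intro h
  have := sqrt2_sq
  rw [h] at this
  norm_num at this

lemma inv_sqrt2_sq : ((Real.sqrt 2 : ℝ) : ℂ)⁻¹ * ((Real.sqrt 2 : ℝ) : ℂ)⁻¹ = 2⁻¹ := by
  rw [← mul_inv, sqrt2_sq]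

lemma pairing_fbar_f (m : ℕ) (j k : Fin m) :
    pairingLin (2 * m) (fbarvec (2 * m) j) (fvec (2 * m) k) = if j = k then -1 else 0 := by
  have h0 : pairingLin (2 * m) (fbarvec (2 * m) j) (fvec (2 * m) k)
      = ∑ i, fbarvec (2 * m) j i * fvec (2 * m) k i := by
    simp [pairingLin]
  rw [h0]
  split_ifs with h
  · subst h
    have hj := j.2
    rw [Fintype.sum_eq_add (⟨2 * j, by omega⟩ : Fin (2 * m)) (⟨2 * j + 1, by omega⟩ : Fin (2 * m))]
    · simp only [fbarvec, fvec, if_true]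
      rw [if_neg (by omega), if_neg (by omega), neg_mul, inv_sqrt2_sq,
        mul_mul_mul_comm, inv_sqrt2_sq, Complex.I_mul_I]
      norm_num
    · intro h; simp [Fin.ext_iff] at h
    · rintro i ⟨h1, h2⟩
      simp only [ne_eq, Fin.ext_iff] at h1 h2
      simp [fbarvec, h1, h2]
  · refine Finset.sum_eq_zero fun i _ => ?_
    have h' : (j : ℕ) ≠ k := fun e => h (Fin.ext e)
    simp only [fbarvec, fvec]
    split_ifs <;> first | omega | simp

lemma single_mem (m : ℕ) (i : Fin (2 * m)) :
    (fun l => if i = l then 1 else 0 : Fin (2 * m) → ℂ) ∈ Wsub (2 * m) m ⊔ Wbarsub (2 * m) m := by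
  have hi := i.2
  let j : Fin m := ⟨(i : ℕ) / 2, by omega⟩
  have hf : fvec (2 * m) j ∈ Wsub (2 * m) m ⊔ Wbarsub (2 * m) m :=
    Submodule.mem_sup_left (Submodule.subset_span ⟨j, rfl⟩)
  have hb : fbarvec (2 * m) j ∈ Wsub (2 * m) m ⊔ Wbarsub (2 * m) m :=
    Submodule.mem_sup_right (Submodule.subset_span ⟨j, rfl⟩)
  have hs := inv_sqrt2_sq
  rcases Nat.mod_two_eq_zero_or_one i with h | h
  · have := Submodule.smul_mem _ ((Real.sqrt 2 : ℂ))⁻¹ (Submodule.sub_mem _ hf hb)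
    convert this using 1
    ext l
    simp only [Pi.smul_apply, Pi.sub_apply, fvec, fbarvec, smul_eq_mul, Fin.ext_iff, j]
    split_ifs <;> first | omega | skip
    · rw [sub_neg_eq_add, mul_add, hs]; norm_num
    · ring
    · ring
  · have := Submodule.smul_mem _ (-Complex.I * ((Real.sqrt 2 : ℂ))⁻¹) (Submodule.add_mem _ hf hb)
    convert this using 1
    ext l
    simp only [Pi.smul_apply, Pi.add_apply, fvec, fbarvec, smul_eq_mul, Fin.ext_iff, j]
    split_ifs <;> first | omega | skip
    · rw [mul_add, mul_mul_mul_comm, hs, neg_mul, Complex.I_mul_I]; norm_num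
    · ring
    · ring

lemma exists_decomp (m : ℕ) (x : Fin (2 * m) → ℂ) :
    ∃ (u : Wsub (2 * m) m) (v : Wbarsub (2 * m) m),
      x = (u : Fin (2 * m) → ℂ) + (v : Fin (2 * m) → ℂ) := by
  have : x ∈ Wsub (2 * m) m ⊔ Wbarsub (2 * m) m := by
    rw [pi_eq_sum_univ x]
    exact Submodule.sum_mem _ fun i _ => Submodule.smul_mem _ _ (single_mem m i)
  obtain ⟨u, hu, v, hv, h⟩ := Submodule.mem_sup.1 this
  exact ⟨⟨u, hu⟩, ⟨v, hv⟩, h.symm⟩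

/-- The `f_j` as elements of `W`. -/
def fW (m : ℕ) (j : Fin m) : Wsub (2 * m) m :=
  ⟨fvec (2 * m) j, Submodule.subset_span ⟨j, rfl⟩⟩

/-- The dual basis, given by pairing with `-f̄_j`. -/
def dW (m : ℕ) (j : Fin m) : Module.Dual ℂ (Wsub (2 * m) m) :=
  (pairingLin (2 * m) (-fbarvec (2 * m) j)).comp (Wsub (2 * m) m).subtype

lemma pairingLin_smul (n : ℕ) (c : ℂ) (v : Fin n → ℂ) :
    pairingLin n (c • v) = c • pairingLin n v := by
  simp [pairingLin, Finset.smul_sum, smul_smul]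

lemma intMul_smul (n m : ℕ) (c : ℂ) (v : Fin n → ℂ) (x : Spinor n m) :
    intMul n m (c • v) x = c • intMul n m v x := by
  unfold intMul
  rw [pairingLin_smul, LinearMap.smul_comp, map_smul, LinearMap.smul_apply]

lemma dW_fW (m : ℕ) (i j : Fin m) : dW m i (fW m j) = if i = j then 1 else 0 := by
  have h : dW m i (fW m j) = - pairingLin (2 * m) (fbarvec (2 * m) i) (fvec (2 * m) j) := by
    have := pairingLin_smul (2 * m) (-1) (fbarvec (2 * m) i)
    rw [neg_one_smul, neg_one_smul] at this
    simp only [dW, this, fW]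
    rfl
  rw [h, pairing_fbar_f]
  split_ifs <;> simp

lemma fW_span (m : ℕ) : Submodule.span ℂ (Set.range (fW m)) = ⊤ := by
  apply Submodule.map_injective_of_injective (Wsub (2 * m) m).injective_subtype
  rw [Submodule.map_span, Submodule.map_top, Submodule.range_subtype, ← Set.range_comp]
  rfl

end HalfSpinAux

/-- Let `n = 2m` and `τ : ℂCl(2m) → End(⋀W_m)` the spinor representation,
`τ(u + v̄) = √2 ε(u) − √2 ι(v̄)`. Then `𝕊⁺ = ⋀^{even}W_m` and `𝕊⁻ = ⋀^{odd}W_m` are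
invariant under `τ(a)` for every `a` in the even subalgebra `ℂCl⁰(2m)`; each of `𝕊⁺`, `𝕊⁻`
is a simple module over `ℂCl⁰(2m)`; and `𝕊⁺` and `𝕊⁻` are not isomorphic as
`ℂCl⁰(2m)`-modules. -/
theorem half_spin_even_odd (m : ℕ) (hm : 1 ≤ m)
    (τ : CliffordAlgebra (Qc (2 * m)) →ₐ[ℂ] Module.End ℂ (Spinor (2 * m) m))
    (hτ : ∀ (u : Wsub (2 * m) m) (v : Wbarsub (2 * m) m) (x : Spinor (2 * m) m),
        τ (CliffordAlgebra.ι (Qc (2 * m))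
            ((u : Fin (2 * m) → ℂ) + (v : Fin (2 * m) → ℂ))) x =
          (Real.sqrt 2 : ℂ) • (ExteriorAlgebra.ι ℂ u * x) -
            (Real.sqrt 2 : ℂ) • intMul (2 * m) m (v : Fin (2 * m) → ℂ) x) :
    -- `𝕊⁺` and `𝕊⁻` are invariant under the even subalgebra
    (∀ a ∈ CliffordAlgebra.evenOdd (Qc (2 * m)) 0,
        ∀ x ∈ SpinorEven (2 * m) m, τ a x ∈ SpinorEven (2 * m) m) ∧
    (∀ a ∈ CliffordAlgebra.evenOdd (Qc (2 * m)) 0,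
        ∀ x ∈ SpinorOdd (2 * m) m, τ a x ∈ SpinorOdd (2 * m) m) ∧
    -- each is a simple (in particular nonzero) module over `ℂCl⁰(2m)`
    SpinorEven (2 * m) m ≠ ⊥ ∧ SpinorOdd (2 * m) m ≠ ⊥ ∧
    (∀ U : Submodule ℂ (Spinor (2 * m) m), U ≤ SpinorEven (2 * m) m →
        (∀ a ∈ CliffordAlgebra.evenOdd (Qc (2 * m)) 0, ∀ x ∈ U, τ a x ∈ U) →
        U = ⊥ ∨ U = SpinorEven (2 * m) m) ∧
    (∀ U : Submodule ℂ (Spinor (2 * m) m), U ≤ SpinorOdd (2 * m) m →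
        (∀ a ∈ CliffordAlgebra.evenOdd (Qc (2 * m)) 0, ∀ x ∈ U, τ a x ∈ U) →
        U = ⊥ ∨ U = SpinorOdd (2 * m) m) ∧
    -- `𝕊⁺` and `𝕊⁻` are not isomorphic as `ℂCl⁰(2m)`-modules
    ¬ ∃ g : SpinorEven (2 * m) m ≃ₗ[ℂ] SpinorOdd (2 * m) m,
        ∀ a ∈ CliffordAlgebra.evenOdd (Qc (2 * m)) 0,
          ∀ x y : SpinorEven (2 * m) m,
            (y : Spinor (2 * m) m) = τ a (x : Spinor (2 * m) m) →
              (g y : Spinor (2 * m) m) = τ a (g x : Spinor (2 * m) m) := by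
  have hm' : ∀ w : Wsub (2 * m) m, ∃ v : Fin (2 * m) → ℂ, ∀ x,
      τ (CliffordAlgebra.ι (Qc (2 * m)) v) x = ExteriorAlgebra.ι ℂ w * x := by
    intro w
    refine ⟨_, fun x => (hτ (((Real.sqrt 2 : ℝ) : ℂ)⁻¹ • w) 0 x).trans ?_⟩
    have h0 : intMul (2 * m) m ((0 : Wbarsub (2 * m) m) : Fin (2 * m) → ℂ) x = 0 := by
      have := intMul_smul (2 * m) m 0 0 x
      rw [zero_smul, zero_smul] at this
      simpa using this
    rw [h0, smul_zero, sub_zero, map_smul, smul_mul_assoc, smul_smul, mul_inv_cancel₀ sqrt2_ne,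
      one_smul]
  have hc' : ∀ j : Fin m, ∃ v : Fin (2 * m) → ℂ, ∀ x,
      τ (CliffordAlgebra.ι (Qc (2 * m)) v) x =
        CliffordAlgebra.contractLeft (Q := (0 : QuadraticForm ℂ (Wsub (2 * m) m))) (dW m j) x := by
    intro j
    have hmem : -fbarvec (2 * m) j ∈ Wbarsub (2 * m) m :=
      Submodule.neg_mem _ (Submodule.subset_span ⟨j, rfl⟩)
    refine ⟨_, fun x => (hτ 0 ((-((Real.sqrt 2 : ℝ) : ℂ)⁻¹) • ⟨_, hmem⟩) x).trans ?_⟩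
    rw [map_zero, zero_mul, smul_zero, zero_sub, Submodule.coe_smul, intMul_smul, smul_smul,
      mul_neg, mul_inv_cancel₀ sqrt2_ne, neg_one_smul, neg_neg]
    rfl
  have hpar : ∀ (v : Fin (2 * m) → ℂ) (i : ZMod 2),
      ∀ x ∈ CliffordAlgebra.evenOdd (0 : QuadraticForm ℂ (Wsub (2 * m) m)) i,
      τ (CliffordAlgebra.ι (Qc (2 * m)) v) x ∈
        CliffordAlgebra.evenOdd (0 : QuadraticForm ℂ (Wsub (2 * m) m)) (i + 1) := by
    intro v i x hx
    obtain ⟨u, w, rfl⟩ := exists_decomp m v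
    rw [hτ]
    refine Submodule.sub_mem _ (Submodule.smul_mem _ _ ?_) (Submodule.smul_mem _ _ ?_)
    · rw [add_comm]
      exact SetLike.mul_mem_graded (CliffordAlgebra.ι_mem_evenOdd_one _ u) hx
    · exact contract_parity _ i x hx
  have hone : (1 : Spinor (2 * m) m) ∈ SpinorEven (2 * m) m :=
    SetLike.one_mem_graded (CliffordAlgebra.evenOdd (0 : QuadraticForm ℂ (Wsub (2 * m) m)))
  refine ⟨half_invariant τ hpar 0, half_invariant τ hpar 1, ?_, ?_,
    half_simple (fW m) (dW m) (fW_span m) (dW_fW m) τ hpar hm' hc' 0,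
    half_simple (fW m) (dW m) (fW_span m) (dW_fW m) τ hpar hm' hc' 1, ?_⟩
  · intro h
    rw [h, Submodule.mem_bot] at hone
    exact one_ne_zero hone
  · intro h
    have h1 : ExteriorAlgebra.ι ℂ (fW m ⟨0, hm⟩) ∈ SpinorOdd (2 * m) m :=
      CliffordAlgebra.ι_mem_evenOdd_one _ _
    rw [h, Submodule.mem_bot, ExteriorAlgebra.ι_eq_zero_iff] at h1
    have h2 := dW_fW m ⟨0, hm⟩ ⟨0, hm⟩
    rw [h1, map_zero, if_pos rfl] at h2
    exact zero_ne_one h2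
  · rintro ⟨g, hg⟩
    obtain ⟨a, ha, hav⟩ := exists_vac (fW m) (dW m) τ hm' hc' (List.finRange m)
    have h := hg a ha ⟨1, hone⟩ ⟨1, hone⟩ (by rw [hav, vacList_one _ _ (dW_fW m)])
    rw [hav, vacList_odd _ _ (fW_span m) (dW_fW m) _ (g ⟨1, hone⟩).2] at h
    have h0 : g ⟨1, hone⟩ = 0 := Subtype.ext h
    rw [LinearEquiv.map_eq_zero_iff] at h0
    exact one_ne_zero (congrArg Subtype.val h0)
end
end

section
/- Let n = 2m. The Dirac spinor space 𝕊_{2m} = ⋀W_m, equipped with the module structure τ_{2m}(u + v̄) = √2 ε(u) − √2 ι(v̄), is a simple module over ℂCl(2m) of complex dimension 2^m; moreover, every simple ℂCl(2m)-module is isomorphic to 𝕊_{2m}, i.e. up to equivalence τ_{2m} is the unique irreducible representation of ℂCl(2m). -/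
set_option synthInstance.maxHeartbeats 1000000
set_option maxHeartbeats 1000000

noncomputable section

open Complex

namespace SpinorAux

def ia {m : ℕ} (j : Fin m) : Fin (2 * m) := ⟨2 * j, by omega⟩
def ib {m : ℕ} (j : Fin m) : Fin (2 * m) := ⟨2 * j + 1, by omega⟩

lemma sq2 : ((Real.sqrt 2 : ℝ) : ℂ) * ((Real.sqrt 2 : ℝ) : ℂ) = 2 := by
  rw [← Complex.ofReal_mul, Real.mul_self_sqrt (by norm_num)]; norm_num

lemma s2ne : ((Real.sqrt 2 : ℝ) : ℂ) ≠ 0 := by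
  intro h
  have := sq2
  rw [h] at this
  norm_num at this

lemma inv2 : ((Real.sqrt 2 : ℝ) : ℂ)⁻¹ * ((Real.sqrt 2 : ℝ) : ℂ)⁻¹ = 1 / 2 := by
  rw [← mul_inv, sq2]; norm_num

lemma fvec_eq {m : ℕ} (j : Fin m) : fvec (2 * m) j =
    ((Real.sqrt 2 : ℂ))⁻¹ • Pi.single (ia j) 1 +
      (Complex.I * ((Real.sqrt 2 : ℂ))⁻¹) • Pi.single (ib j) 1 := by
  funext i
  simp only [fvec, Pi.add_apply, Pi.smul_apply, Pi.single_apply, ia, ib, Fin.ext_iff, smul_eq_mul]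
  split_ifs <;> first | omega | simp

lemma fbarvec_eq {m : ℕ} (j : Fin m) : fbarvec (2 * m) j =
    (-((Real.sqrt 2 : ℂ))⁻¹) • Pi.single (ia j) 1 +
      (Complex.I * ((Real.sqrt 2 : ℂ))⁻¹) • Pi.single (ib j) 1 := by
  funext i
  simp only [fbarvec, Pi.add_apply, Pi.smul_apply, Pi.single_apply, ia, ib, Fin.ext_iff,
    smul_eq_mul]
  split_ifs <;> first | omega | simp

lemma pairing_apply (n : ℕ) (v z : Fin n → ℂ) : pairingLin n v z = ∑ i, v i * z i := by
  simp [pairingLin]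

lemma pairing_comm (n : ℕ) (v z : Fin n → ℂ) : pairingLin n v z = pairingLin n z v := by
  simp [pairing_apply, mul_comm]

lemma pairing_fvec {m : ℕ} (j : Fin m) (z : Fin (2 * m) → ℂ) :
    pairingLin (2 * m) (fvec (2 * m) j) z =
      ((Real.sqrt 2 : ℂ))⁻¹ * z (ia j) + (Complex.I * ((Real.sqrt 2 : ℂ))⁻¹) * z (ib j) := by
  rw [pairing_comm, fvec_eq, map_add, map_smul, map_smul]
  simp [pairing_apply, Pi.single_apply]

lemma pairing_fbarvec {m : ℕ} (j : Fin m) (z : Fin (2 * m) → ℂ) :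
    pairingLin (2 * m) (fbarvec (2 * m) j) z =
      -((Real.sqrt 2 : ℂ))⁻¹ * z (ia j) + (Complex.I * ((Real.sqrt 2 : ℂ))⁻¹) * z (ib j) := by
  rw [pairing_comm, fbarvec_eq, map_add, map_smul, map_smul]
  simp [pairing_apply, Pi.single_apply]

lemma fvec_ia {m : ℕ} (j k : Fin m) :
    fvec (2 * m) k (ia j) = if j = k then ((Real.sqrt 2 : ℂ))⁻¹ else 0 := by
  have e : ((ia j : Fin (2 * m)) : ℕ) = 2 * (j : ℕ) := rfl
  simp only [fvec, Fin.ext_iff]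
  split_ifs <;> first | rfl | omega

lemma fvec_ib {m : ℕ} (j k : Fin m) :
    fvec (2 * m) k (ib j) = if j = k then Complex.I * ((Real.sqrt 2 : ℂ))⁻¹ else 0 := by
  have e : ((ib j : Fin (2 * m)) : ℕ) = 2 * (j : ℕ) + 1 := rfl
  simp only [fvec, Fin.ext_iff]
  split_ifs <;> first | rfl | omega

lemma fbarvec_ia {m : ℕ} (j k : Fin m) :
    fbarvec (2 * m) k (ia j) = if j = k then -((Real.sqrt 2 : ℂ))⁻¹ else 0 := by
  have e : ((ia j : Fin (2 * m)) : ℕ) = 2 * (j : ℕ) := rfl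
  simp only [fbarvec, Fin.ext_iff]
  split_ifs <;> first | rfl | omega

lemma fbarvec_ib {m : ℕ} (j k : Fin m) :
    fbarvec (2 * m) k (ib j) = if j = k then Complex.I * ((Real.sqrt 2 : ℂ))⁻¹ else 0 := by
  have e : ((ib j : Fin (2 * m)) : ℕ) = 2 * (j : ℕ) + 1 := rfl
  simp only [fbarvec, Fin.ext_iff]
  split_ifs <;> first | rfl | omega

lemma ff {m : ℕ} (j k : Fin m) :
    pairingLin (2 * m) (fvec (2 * m) j) (fvec (2 * m) k) = 0 := by
  rw [pairing_fvec, fvec_ia, fvec_ib]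
  split_ifs
  · linear_combination (1 + Complex.I ^ 2) * inv2 + (1 / 2) * Complex.I_sq
  · simp

lemma bb {m : ℕ} (j k : Fin m) :
    pairingLin (2 * m) (fbarvec (2 * m) j) (fbarvec (2 * m) k) = 0 := by
  rw [pairing_fbarvec, fbarvec_ia, fbarvec_ib]
  split_ifs
  · linear_combination (1 + Complex.I ^ 2) * inv2 + (1 / 2) * Complex.I_sq
  · simp

lemma bf {m : ℕ} (j k : Fin m) :
    pairingLin (2 * m) (fbarvec (2 * m) j) (fvec (2 * m) k) = if j = k then -1 else 0 := by
  rw [pairing_fbarvec, fvec_ia, fvec_ib]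
  split_ifs
  · linear_combination (-1 + Complex.I ^ 2) * inv2 + (1 / 2) * Complex.I_sq
  · simp

lemma polar_eq (n : ℕ) (v z : Fin n → ℂ) :
    QuadraticMap.polar (Qc n) v z = -2 * pairingLin n v z := by
  simp only [QuadraticMap.polar, Qc, QuadraticMap.weightedSumSquares_apply, pairing_apply,
    Finset.mul_sum, ← Finset.sum_sub_distrib]
  refine Finset.sum_congr rfl fun i _ => ?_
  simp only [Pi.add_apply, smul_eq_mul]
  ring

lemma pairing_add_left (n : ℕ) (v w z : Fin n → ℂ) :
    pairingLin n (v + w) z = pairingLin n v z + pairingLin n w z := by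
  rw [pairing_comm, map_add, pairing_comm n z, pairing_comm n z]

lemma pairing_W {m : ℕ} {v z : Fin (2 * m) → ℂ} (hv : v ∈ Wsub (2 * m) m)
    (hz : z ∈ Wsub (2 * m) m) : pairingLin (2 * m) v z = 0 := by
  have h1 : ∀ j : Fin m, pairingLin (2 * m) (fvec (2 * m) j) z = 0 := by
    intro j
    have : Wsub (2 * m) m ≤ LinearMap.ker (pairingLin (2 * m) (fvec (2 * m) j)) := by
      refine Submodule.span_le.2 ?_
      rintro _ ⟨k, rfl⟩
      exact ff j k
    exact this hz
  have : Wsub (2 * m) m ≤ LinearMap.ker (pairingLin (2 * m) z) := by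
    refine Submodule.span_le.2 ?_
    rintro _ ⟨k, rfl⟩
    exact (pairing_comm _ _ _).trans (h1 k)
  rw [pairing_comm]
  exact this hv

lemma top_le (m : ℕ) : (⊤ : Submodule ℂ (Fin (2 * m) → ℂ)) ≤ Wsub (2 * m) m ⊔ Wbarsub (2 * m) m := by
  rw [← (Pi.basisFun ℂ (Fin (2 * m))).span_eq]
  refine Submodule.span_le.2 ?_
  rintro _ ⟨i, rfl⟩
  have hj : (i : ℕ) / 2 < m := by omega
  set j : Fin m := ⟨(i : ℕ) / 2, hj⟩ with hjd
  have h1 : fvec (2 * m) j ∈ Wsub (2 * m) m ⊔ Wbarsub (2 * m) m :=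
    Submodule.mem_sup_left (Submodule.subset_span ⟨j, rfl⟩)
  have h2 : fbarvec (2 * m) j ∈ Wsub (2 * m) m ⊔ Wbarsub (2 * m) m :=
    Submodule.mem_sup_right (Submodule.subset_span ⟨j, rfl⟩)
  rw [SetLike.mem_coe, Pi.basisFun_apply]
  have hs := inv2
  have hI := Complex.I_sq
  rcases Nat.mod_two_eq_zero_or_one i with h | h
  · have hi : i = ia j := by ext; simp only [ia, hjd]; omega
    have : (Pi.single i 1 : Fin (2 * m) → ℂ) =
        ((Real.sqrt 2 : ℂ))⁻¹ • (fvec (2 * m) j - fbarvec (2 * m) j) := by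
      rw [fvec_eq, fbarvec_eq, ← hi]
      match_scalars
      · linear_combination (-2) * hs
      · ring
    rw [this]
    exact Submodule.smul_mem _ _ (Submodule.sub_mem _ h1 h2)
  · have hi : i = ib j := by ext; simp only [ib, hjd]; omega
    have : (Pi.single i 1 : Fin (2 * m) → ℂ) =
        (-Complex.I * ((Real.sqrt 2 : ℂ))⁻¹) • (fvec (2 * m) j + fbarvec (2 * m) j) := by
      rw [fvec_eq, fbarvec_eq, ← hi]
      match_scalars
      · linear_combination (2 * Complex.I ^ 2) * hs + hI
      · ring
    rw [this]
    exact Submodule.smul_mem _ _ (Submodule.add_mem _ h1 h2)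

lemma exists_decomp {m : ℕ} (z : Fin (2 * m) → ℂ) :
    ∃ (u : Wsub (2 * m) m) (v : Wbarsub (2 * m) m), z = (u : Fin (2 * m) → ℂ) + v := by
  obtain ⟨u, hu, v, hv, h⟩ := Submodule.mem_sup.1 (top_le m (Submodule.mem_top (x := z)))
  exact ⟨⟨u, hu⟩, ⟨v, hv⟩, h.symm⟩

/-- The generator `f_j` as an element of `W`. -/
def fW {m : ℕ} (j : Fin m) : Wsub (2 * m) m := ⟨fvec (2 * m) j, Submodule.subset_span ⟨j, rfl⟩⟩
/-- The generator `f̄_j` as an element of `W̄`. -/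
def fB {m : ℕ} (j : Fin m) : Wbarsub (2 * m) m :=
  ⟨fbarvec (2 * m) j, Submodule.subset_span ⟨j, rfl⟩⟩

lemma fW_indep (m : ℕ) : LinearIndependent ℂ (fun j : Fin m => fvec (2 * m) j) := by
  rw [Fintype.linearIndependent_iff]
  intro g hg i
  have := congrArg (pairingLin (2 * m) (fbarvec (2 * m) i)) hg
  simpa [bf] using this

lemma finrank_spinor (m : ℕ) : Module.finrank ℂ (Spinor (2 * m) m) = 2 ^ m := by
  let b : Module.Basis (Fin m) ℂ (Wsub (2 * m) m) := Module.Basis.span (fW_indep m)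
  rw [Module.finrank_eq_card_basis b.ExteriorAlgebra]
  simp

lemma expand {m : ℕ} (u : Wsub (2 * m) m) :
    ∑ j : Fin m, (-pairingLin (2 * m) (fbarvec (2 * m) j) u) • (fW j) = u := by
  apply Subtype.ext
  obtain ⟨u, hu⟩ := u
  simp only [Submodule.coe_sum, Submodule.coe_smul, fW]
  refine Submodule.span_induction (p := fun u _ => ∑ j : Fin m,
    (-pairingLin (2 * m) (fbarvec (2 * m) j) u) • fvec (2 * m) j = u) ?_ ?_ ?_ ?_ hu
  · rintro _ ⟨k, rfl⟩
    simp [bf]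
  · simp
  · intro x y _ _ hx hy
    conv_rhs => rw [← hx, ← hy]
    simp only [map_add, neg_add, add_smul, Finset.sum_add_distrib]
  · intro a x _ hx
    conv_rhs => rw [← hx]
    simp only [map_smul, Finset.smul_sum, smul_smul, smul_eq_mul, mul_neg]

lemma intMul_ι_mul {m : ℕ} (v : Fin (2 * m) → ℂ) (u : Wsub (2 * m) m) (y : Spinor (2 * m) m) :
    intMul (2 * m) m v (ExteriorAlgebra.ι ℂ u * y) =
      (pairingLin (2 * m) v u) • y - ExteriorAlgebra.ι ℂ u * intMul (2 * m) m v y :=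
  CliffordAlgebra.contractLeft_ι_mul _ _ _

lemma intMul_algebraMap {m : ℕ} (v : Fin (2 * m) → ℂ) (r : ℂ) :
    intMul (2 * m) m v (algebraMap ℂ (Spinor (2 * m) m) r) = 0 :=
  CliffordAlgebra.contractLeft_algebraMap _ _ _

/-- The number operator. -/
def num (m : ℕ) : Module.End ℂ (Spinor (2 * m) m) :=
  -∑ j : Fin m, extMul (2 * m) m (fW j) ∘ₗ intMul (2 * m) m (fbarvec (2 * m) j)

lemma num_apply {m : ℕ} (x : Spinor (2 * m) m) : num m x =
    -∑ j : Fin m, ExteriorAlgebra.ι ℂ (fW j) * intMul (2 * m) m (fbarvec (2 * m) j) x := by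
  simp [num, extMul]

lemma num_ι_mul {m : ℕ} (u : Wsub (2 * m) m) (y : Spinor (2 * m) m) :
    num m (ExteriorAlgebra.ι ℂ u * y) =
      ExteriorAlgebra.ι ℂ u * y + ExteriorAlgebra.ι ℂ u * num m y := by
  have h : ExteriorAlgebra.ι ℂ u * y = ∑ j : Fin m,
      (-pairingLin (2 * m) (fbarvec (2 * m) j) u) • (ExteriorAlgebra.ι ℂ (fW j) * y) := by
    conv_lhs => rw [← expand u]
    simp only [map_sum, map_smul, Finset.sum_mul, smul_mul_assoc]
  rw [num_apply, num_apply]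
  conv_rhs => rw [h]
  rw [mul_neg, Finset.mul_sum, ← Finset.sum_neg_distrib, ← Finset.sum_neg_distrib,
    ← Finset.sum_add_distrib]
  refine Finset.sum_congr rfl fun j _ => ?_
  have hc : ExteriorAlgebra.ι ℂ (fW j) * ExteriorAlgebra.ι ℂ u =
      -(ExteriorAlgebra.ι ℂ u * ExteriorAlgebra.ι ℂ (fW j)) :=
    eq_neg_of_add_eq_zero_left (ExteriorAlgebra.ι_add_mul_swap _ _)
  rw [intMul_ι_mul, mul_sub, mul_smul_comm, ← mul_assoc, hc, neg_smul, neg_mul, mul_assoc]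
  abel

lemma num_degree {m : ℕ} (n : ℕ) (x : Spinor (2 * m) m)
    (hx : x ∈ LinearMap.range (ExteriorAlgebra.ι ℂ : Wsub (2 * m) m →ₗ[ℂ] _) ^ n) :
    num m x = (n : ℂ) • x := by
  induction hx using Submodule.pow_induction_on_left' with
  | algebraMap r => rw [num_apply]; simp [intMul_algebraMap]
  | add x y i hx hy h1 h2 => rw [map_add, h1, h2, smul_add]
  | mem_mul w hw i x hx h =>
    obtain ⟨u, rfl⟩ := hw
    rw [num_ι_mul, h, mul_smul_comm]
    push_cast
    rw [add_smul, one_smul, add_comm]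

lemma scalar_of_vacuum {m : ℕ} (x : Spinor (2 * m) m)
    (hx : ∀ j : Fin m, intMul (2 * m) m (fbarvec (2 * m) j) x = 0) :
    ∃ r : ℂ, x = algebraMap ℂ _ r := by
  classical
  have h0 : num m x = 0 := by rw [num_apply]; simp [hx]
  let 𝒜 : ℕ → Submodule ℂ (Spinor (2 * m) m) := fun i => ⋀[ℂ]^i (Wsub (2 * m) m)
  have hcomm : ∀ (y : Spinor (2 * m) m) (i : ℕ),
      (DirectSum.decompose 𝒜 (num m y) i : Spinor (2 * m) m) =
        (i : ℂ) • (DirectSum.decompose 𝒜 y i : Spinor (2 * m) m) := by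
    intro y i
    induction y using DirectSum.Decomposition.inductionOn 𝒜 with
    | zero => simp
    | @homogeneous k z =>
      rw [num_degree k (z : Spinor (2 * m) m) z.2, DirectSum.decompose_smul, DirectSum.smul_apply, Submodule.coe_smul]
      by_cases hk : k = i
      · subst hk; rfl
      · rw [DirectSum.decompose_of_mem_ne 𝒜 z.2 hk, smul_zero, smul_zero]
    | add y z hy hz =>
      rw [map_add, DirectSum.decompose_add, DirectSum.decompose_add, DirectSum.add_apply,
        DirectSum.add_apply, Submodule.coe_add, Submodule.coe_add, hy, hz, smul_add]
  have hz : ∀ i, i ≠ 0 → (DirectSum.decompose 𝒜 x i : Spinor (2 * m) m) = 0 := by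
    intro i hi
    have := hcomm x i
    rw [h0, DirectSum.decompose_zero] at this
    have h2 : (i : ℂ) • (DirectSum.decompose 𝒜 x i : Spinor (2 * m) m) = 0 := by
      rw [← this]; rfl
    exact (smul_eq_zero.1 h2).resolve_left (by exact_mod_cast hi)
  have hx0 : x = (DirectSum.decompose 𝒜 x 0 : Spinor (2 * m) m) := by
    conv_lhs => rw [← DirectSum.sum_support_decompose 𝒜 x]
    refine Finset.sum_eq_single 0 (fun i _ hi => hz i hi) ?_
    intro h
    simpa using h
  have hm : x ∈ LinearMap.range (ExteriorAlgebra.ι ℂ : Wsub (2 * m) m →ₗ[ℂ] _) ^ 0 := by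
    rw [hx0]
    exact (DirectSum.decompose 𝒜 x 0).2
  rw [pow_zero] at hm
  obtain ⟨r, hr⟩ := Submodule.mem_one.1 hm
  exact ⟨r, hr.symm⟩

lemma exists_vacuum {m : ℕ} {N : Type*} [AddCommGroup N] [Module ℂ N]
    (ρ : CliffordAlgebra (Qc (2 * m)) →ₐ[ℂ] Module.End ℂ N) (U : Submodule ℂ N)
    (hU : ∀ a : CliffordAlgebra (Qc (2 * m)), ∀ x ∈ U, ρ a x ∈ U) (hne : U ≠ ⊥) :
    ∃ v ∈ U, v ≠ 0 ∧ ∀ j : Fin m,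
      ρ (CliffordAlgebra.ι (Qc (2 * m)) (fbarvec (2 * m) j)) v = 0 := by
  classical
  suffices h : ∀ s : Finset (Fin m), ∃ v ∈ U, v ≠ 0 ∧ ∀ j ∈ s,
      ρ (CliffordAlgebra.ι (Qc (2 * m)) (fbarvec (2 * m) j)) v = 0 by
    obtain ⟨v, h1, h2, h3⟩ := h Finset.univ
    exact ⟨v, h1, h2, fun j => h3 j (Finset.mem_univ j)⟩
  have hanti : ∀ (i j : Fin m) (v : N),
      ρ (CliffordAlgebra.ι (Qc (2 * m)) (fbarvec (2 * m) i))
        (ρ (CliffordAlgebra.ι (Qc (2 * m)) (fbarvec (2 * m) j)) v) =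
      -ρ (CliffordAlgebra.ι (Qc (2 * m)) (fbarvec (2 * m) j))
        (ρ (CliffordAlgebra.ι (Qc (2 * m)) (fbarvec (2 * m) i)) v) := by
    intro i j v
    have h := CliffordAlgebra.ι_mul_ι_add_swap (Q := Qc (2 * m)) (fbarvec (2 * m) i)
      (fbarvec (2 * m) j)
    rw [polar_eq, bb, mul_zero, map_zero] at h
    have h2 := congrArg (fun a => ρ a v) h
    simp only [map_add, map_mul, map_zero, LinearMap.add_apply, Module.End.mul_apply,
      LinearMap.zero_apply] at h2
    exact eq_neg_of_add_eq_zero_left h2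
  have : IsAddTorsionFree N := IsAddTorsionFree.of_isTorsionFree ℂ N
  intro s
  induction s using Finset.induction_on with
  | empty =>
    obtain ⟨v, hv, h0⟩ := Submodule.exists_mem_ne_zero_of_ne_bot hne
    exact ⟨v, hv, h0, by simp⟩
  | insert i s his ih =>
    obtain ⟨v, hv, h0, hs⟩ := ih
    by_cases hi : ρ (CliffordAlgebra.ι (Qc (2 * m)) (fbarvec (2 * m) i)) v = 0
    · refine ⟨v, hv, h0, fun j hj => ?_⟩
      rcases Finset.mem_insert.1 hj with rfl | hj
      · exact hi
      · exact hs j hj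
    · refine ⟨_, hU _ v hv, hi, fun j hj => ?_⟩
      rcases Finset.mem_insert.1 hj with rfl | hj
      · exact self_eq_neg.1 (by
          have := hanti j j v
          exact this)
      · rw [hanti, hs j hj, map_zero, neg_zero]

lemma intMul_zero {m : ℕ} (x : Spinor (2 * m) m) : intMul (2 * m) m 0 x = 0 := by
  have : pairingLin (2 * m) 0 = 0 := by simp [pairingLin]
  simp [intMul, this]

lemma tau_u {m : ℕ} (τ : CliffordAlgebra (Qc (2 * m)) →ₐ[ℂ] Module.End ℂ (Spinor (2 * m) m))
    (hτ : ∀ (u : Wsub (2 * m) m) (v : Wbarsub (2 * m) m) (x : Spinor (2 * m) m),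
        τ (CliffordAlgebra.ι (Qc (2 * m))
            ((u : Fin (2 * m) → ℂ) + (v : Fin (2 * m) → ℂ))) x =
          (Real.sqrt 2 : ℂ) • (ExteriorAlgebra.ι ℂ u * x) -
            (Real.sqrt 2 : ℂ) • intMul (2 * m) m (v : Fin (2 * m) → ℂ) x)
    (u : Wsub (2 * m) m) (x : Spinor (2 * m) m) :
    τ (CliffordAlgebra.ι (Qc (2 * m)) (u : Fin (2 * m) → ℂ)) x =
      (Real.sqrt 2 : ℂ) • (ExteriorAlgebra.ι ℂ u * x) := by
  simpa [intMul_zero] using hτ u 0 x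

lemma tau_v {m : ℕ} (τ : CliffordAlgebra (Qc (2 * m)) →ₐ[ℂ] Module.End ℂ (Spinor (2 * m) m))
    (hτ : ∀ (u : Wsub (2 * m) m) (v : Wbarsub (2 * m) m) (x : Spinor (2 * m) m),
        τ (CliffordAlgebra.ι (Qc (2 * m))
            ((u : Fin (2 * m) → ℂ) + (v : Fin (2 * m) → ℂ))) x =
          (Real.sqrt 2 : ℂ) • (ExteriorAlgebra.ι ℂ u * x) -
            (Real.sqrt 2 : ℂ) • intMul (2 * m) m (v : Fin (2 * m) → ℂ) x)
    (v : Wbarsub (2 * m) m) (x : Spinor (2 * m) m) :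
    τ (CliffordAlgebra.ι (Qc (2 * m)) (v : Fin (2 * m) → ℂ)) x =
      -((Real.sqrt 2 : ℂ) • intMul (2 * m) m (v : Fin (2 * m) → ℂ) x) := by
  simpa using hτ 0 v x

lemma simple {m : ℕ} (τ : CliffordAlgebra (Qc (2 * m)) →ₐ[ℂ] Module.End ℂ (Spinor (2 * m) m))
    (hτ : ∀ (u : Wsub (2 * m) m) (v : Wbarsub (2 * m) m) (x : Spinor (2 * m) m),
        τ (CliffordAlgebra.ι (Qc (2 * m))
            ((u : Fin (2 * m) → ℂ) + (v : Fin (2 * m) → ℂ))) x =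
          (Real.sqrt 2 : ℂ) • (ExteriorAlgebra.ι ℂ u * x) -
            (Real.sqrt 2 : ℂ) • intMul (2 * m) m (v : Fin (2 * m) → ℂ) x)
    (U : Submodule ℂ (Spinor (2 * m) m))
    (hU : ∀ a : CliffordAlgebra (Qc (2 * m)), ∀ x ∈ U, τ a x ∈ U) : U = ⊥ ∨ U = ⊤ := by
  by_cases hb : U = ⊥
  · exact Or.inl hb
  right
  obtain ⟨v, hv, hv0, hvac⟩ := exists_vacuum τ U hU hb
  obtain ⟨r, rfl⟩ := scalar_of_vacuum v (fun j => by
    have h1 := tau_v τ hτ (fB j) v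
    have h2 : τ (CliffordAlgebra.ι (Qc (2 * m)) ((fB j : Wbarsub (2 * m) m) : Fin (2 * m) → ℂ)) v
      = 0 := hvac j
    rw [h2] at h1
    exact (smul_eq_zero.1 (neg_eq_zero.1 h1.symm)).resolve_left s2ne)
  have hr : r ≠ 0 := by rintro rfl; simp at hv0
  have h1 : ∀ s : ℂ, algebraMap ℂ (Spinor (2 * m) m) s ∈ U := by
    intro s
    have := U.smul_mem (s * r⁻¹) hv
    rwa [Algebra.smul_def, ← map_mul, mul_assoc, inv_mul_cancel₀ hr, mul_one] at this
  rw [eq_top_iff]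
  rintro x -
  induction x using CliffordAlgebra.left_induction with
  | algebraMap s => exact h1 s
  | add x y hx hy => exact U.add_mem hx hy
  | ι_mul x u hx =>
    have := U.smul_mem ((Real.sqrt 2 : ℂ))⁻¹ (hU (CliffordAlgebra.ι (Qc (2 * m)) u) x hx)
    rw [tau_u τ hτ, smul_smul, inv_mul_cancel₀ s2ne, one_smul] at this
    exact this

lemma unique {m : ℕ} (τ : CliffordAlgebra (Qc (2 * m)) →ₐ[ℂ] Module.End ℂ (Spinor (2 * m) m))
    (hτ : ∀ (u : Wsub (2 * m) m) (v : Wbarsub (2 * m) m) (x : Spinor (2 * m) m),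
        τ (CliffordAlgebra.ι (Qc (2 * m))
            ((u : Fin (2 * m) → ℂ) + (v : Fin (2 * m) → ℂ))) x =
          (Real.sqrt 2 : ℂ) • (ExteriorAlgebra.ι ℂ u * x) -
            (Real.sqrt 2 : ℂ) • intMul (2 * m) m (v : Fin (2 * m) → ℂ) x)
    {N : Type} [AddCommGroup N] [Module ℂ N]
    (ρ : CliffordAlgebra (Qc (2 * m)) →ₐ[ℂ] Module.End ℂ N) [Nontrivial N]
    (hN : ∀ U : Submodule ℂ N,
            (∀ a : CliffordAlgebra (Qc (2 * m)), ∀ x ∈ U, ρ a x ∈ U) → U = ⊥ ∨ U = ⊤) :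
    ∃ g : Spinor (2 * m) m ≃ₗ[ℂ] N,
          ∀ (a : CliffordAlgebra (Qc (2 * m))) (x : Spinor (2 * m) m),
            g (τ a x) = ρ a (g x) := by
  have : IsAddTorsionFree N := IsAddTorsionFree.of_isTorsionFree ℂ N
  obtain ⟨v, -, hv0, hvac⟩ := exists_vacuum ρ ⊤ (fun _ _ _ => Submodule.mem_top) top_ne_bot
  have hanti : ∀ (w z : Fin (2 * m) → ℂ) (y : N),
      ρ (CliffordAlgebra.ι (Qc (2 * m)) w) (ρ (CliffordAlgebra.ι (Qc (2 * m)) z) y) =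
      (-2 * pairingLin (2 * m) w z) • y -
      ρ (CliffordAlgebra.ι (Qc (2 * m)) z) (ρ (CliffordAlgebra.ι (Qc (2 * m)) w) y) := by
    intro w z y
    have h := CliffordAlgebra.ι_mul_ι_add_swap (Q := Qc (2 * m)) w z
    rw [polar_eq] at h
    generalize -2 * pairingLin (2 * m) w z = c at h ⊢
    have h2 := congrArg (fun a => ρ a y) h
    simp only [map_add, map_mul, AlgHom.commutes, LinearMap.add_apply, Module.End.mul_apply,
      Module.algebraMap_end_apply] at h2
    exact eq_sub_of_add_eq h2
  let A : Wsub (2 * m) m →ₗ[ℂ] Module.End ℂ N :=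
    ((Real.sqrt 2 : ℂ))⁻¹ • (ρ.toLinearMap ∘ₗ CliffordAlgebra.ι (Qc (2 * m)) ∘ₗ
      (Wsub (2 * m) m).subtype)
  have hA : ∀ (u : Wsub (2 * m) m) (y : N), A u y =
      ((Real.sqrt 2 : ℂ))⁻¹ • ρ (CliffordAlgebra.ι (Qc (2 * m)) u) y := fun u y => rfl
  have hAA : ∀ u, A u * A u = 0 := by
    intro u
    ext y
    have h := hanti u u y
    rw [pairing_W u.2 u.2, mul_zero, zero_smul, zero_sub] at h
    rw [Module.End.mul_apply, hA, hA, map_smul, self_eq_neg.1 h]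
    simp
  let L := ExteriorAlgebra.lift ℂ ⟨A, hAA⟩
  let g : Spinor (2 * m) m →ₗ[ℂ] N := (LinearMap.applyₗ v) ∘ₗ L.toLinearMap
  have hg : ∀ x, g x = L x v := fun x => rfl
  have hg1 : ∀ r : ℂ, g (algebraMap ℂ _ r) = r • v := by
    intro r
    rw [hg, AlgHom.commutes, Module.algebraMap_end_apply]
  have hgu : ∀ (u : Wsub (2 * m) m) (x : Spinor (2 * m) m),
      g (ExteriorAlgebra.ι ℂ u * x) =
        ((Real.sqrt 2 : ℂ))⁻¹ • ρ (CliffordAlgebra.ι (Qc (2 * m)) u) (g x) := by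
    intro u x
    rw [hg, hg, map_mul, ExteriorAlgebra.lift_ι_apply, Module.End.mul_apply, hA]
  have hvacW : ∀ w : Wbarsub (2 * m) m, ρ (CliffordAlgebra.ι (Qc (2 * m)) w) v = 0 := by
    have : Wbarsub (2 * m) m ≤ LinearMap.ker
        ((LinearMap.applyₗ v) ∘ₗ ρ.toLinearMap ∘ₗ CliffordAlgebra.ι (Qc (2 * m))) := by
      refine Submodule.span_le.2 ?_
      rintro _ ⟨k, rfl⟩
      exact hvac k
    exact fun w => this w.2
  have hgv : ∀ (w : Wbarsub (2 * m) m) (x : Spinor (2 * m) m),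
      -((Real.sqrt 2 : ℂ) • g (intMul (2 * m) m w x)) =
        ρ (CliffordAlgebra.ι (Qc (2 * m)) w) (g x) := by
    intro w x
    induction x using CliffordAlgebra.left_induction with
    | algebraMap r =>
      have h1 := intMul_algebraMap (m := m) w r
      have h2 := hg1 r
      refine Eq.trans ?_ ((congrArg _ h2).trans (by rw [map_smul, hvacW, smul_zero])).symm
      refine (congrArg (fun z => -((Real.sqrt 2 : ℂ) • g z)) h1).trans ?_
      simp
    | add x y hx hy =>
      rw [map_add, map_add, map_add, map_add, smul_add, neg_add, hx, hy]
    | ι_mul x u hx =>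
      have h1 := intMul_ι_mul (m := m) w u x
      have h2 := hgu u x
      refine (congrArg (fun z => -((Real.sqrt 2 : ℂ) • g z)) h1).trans ?_
      refine Eq.trans ?_ (congrArg _ h2).symm
      have h3 : g (intMul (2 * m) m w x) = (-((Real.sqrt 2 : ℂ))⁻¹) •
          ρ (CliffordAlgebra.ι (Qc (2 * m)) w) (g x) := by
        rw [← hx, neg_smul, smul_neg, neg_neg, smul_smul, inv_mul_cancel₀ s2ne, one_smul]
      beta_reduce
      rw [map_sub, map_smul, hgu, h3, map_smul, map_smul, hanti w u]
      have hs := sq2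
      have hn := s2ne
      match_scalars
      · field_simp
        linear_combination (-pairingLin (2 * m) w u) * hs
      · field_simp
  have hι : ∀ (z : Fin (2 * m) → ℂ) (x : Spinor (2 * m) m),
      g (τ (CliffordAlgebra.ι (Qc (2 * m)) z) x) =
        ρ (CliffordAlgebra.ι (Qc (2 * m)) z) (g x) := by
    intro z x
    obtain ⟨u, w, rfl⟩ := exists_decomp z
    rw [map_add, map_add, map_add, LinearMap.add_apply, LinearMap.add_apply, map_add,
      tau_u τ hτ, tau_v τ hτ, map_neg, map_smul, map_smul, hgv, hgu, smul_smul,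
      mul_inv_cancel₀ s2ne, one_smul]
  have hall : ∀ (a : CliffordAlgebra (Qc (2 * m))) (x : Spinor (2 * m) m),
      g (τ a x) = ρ a (g x) := by
    intro a
    induction a using CliffordAlgebra.induction with
    | algebraMap r => intro x; simp [Module.algebraMap_end_apply]
    | ι z => exact hι z
    | mul a b ha hb => intro x; rw [map_mul, map_mul, Module.End.mul_apply, Module.End.mul_apply,
        ha, hb]
    | add a b ha hb => intro x; rw [map_add, map_add, LinearMap.add_apply, LinearMap.add_apply,
        map_add, ha, hb]
  have hgone : g 1 = v := by
    have := hg1 1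
    rwa [map_one, one_smul] at this
  have hker : LinearMap.ker g = ⊥ := by
    rcases simple τ hτ (LinearMap.ker g) (fun a x hx => by
      rw [LinearMap.mem_ker] at hx ⊢
      rw [hall, hx, map_zero]) with h | h
    · exact h
    · exfalso
      have : (1 : Spinor (2 * m) m) ∈ LinearMap.ker g := by rw [h]; trivial
      rw [LinearMap.mem_ker, hgone] at this
      exact hv0 this
  have hrange : LinearMap.range g = ⊤ := by
    rcases hN (LinearMap.range g) (fun a x hx => by
      obtain ⟨y, rfl⟩ := hx
      exact ⟨τ a y, hall a y⟩) with h | h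
    · exfalso
      have : v ∈ LinearMap.range g := ⟨1, hgone⟩
      rw [h] at this
      exact hv0 this
    · exact h
  exact ⟨LinearEquiv.ofBijective g ⟨LinearMap.ker_eq_bot.1 hker, LinearMap.range_eq_top.1 hrange⟩,
    hall⟩

end SpinorAux

/-- Let `n = 2m`. The Dirac spinor space `𝕊_{2m} = ⋀W_m`, with the module
structure `τ(u + v̄) = √2 ε(u) − √2 ι(v̄)`, is a simple `ℂCl(2m)`-module of complex
dimension `2^m`; moreover every simple `ℂCl(2m)`-module is isomorphic to `𝕊_{2m}`, i.e. up
to equivalence `τ` is the unique irreducible representation of `ℂCl(2m)`. -/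
theorem spinor_module_simple_unique (m : ℕ)
    (τ : CliffordAlgebra (Qc (2 * m)) →ₐ[ℂ] Module.End ℂ (Spinor (2 * m) m))
    (hτ : ∀ (u : Wsub (2 * m) m) (v : Wbarsub (2 * m) m) (x : Spinor (2 * m) m),
        τ (CliffordAlgebra.ι (Qc (2 * m))
            ((u : Fin (2 * m) → ℂ) + (v : Fin (2 * m) → ℂ))) x =
          (Real.sqrt 2 : ℂ) • (ExteriorAlgebra.ι ℂ u * x) -
            (Real.sqrt 2 : ℂ) • intMul (2 * m) m (v : Fin (2 * m) → ℂ) x) :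
    -- `𝕊_{2m}` is a simple `ℂCl(2m)`-module …
    Nontrivial (Spinor (2 * m) m) ∧
    (∀ U : Submodule ℂ (Spinor (2 * m) m),
        (∀ a : CliffordAlgebra (Qc (2 * m)), ∀ x ∈ U, τ a x ∈ U) → U = ⊥ ∨ U = ⊤) ∧
    -- … of complex dimension `2^m`
    Module.finrank ℂ (Spinor (2 * m) m) = 2 ^ m ∧
    -- every simple `ℂCl(2m)`-module is isomorphic to `𝕊_{2m}`
    (∀ (N : Type) (_ : AddCommGroup N), ∀ (_ : Module ℂ N),
      ∀ ρ : CliffordAlgebra (Qc (2 * m)) →ₐ[ℂ] Module.End ℂ N,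
        Nontrivial N →
        (∀ U : Submodule ℂ N,
            (∀ a : CliffordAlgebra (Qc (2 * m)), ∀ x ∈ U, ρ a x ∈ U) → U = ⊥ ∨ U = ⊤) →
        ∃ g : Spinor (2 * m) m ≃ₗ[ℂ] N,
          ∀ (a : CliffordAlgebra (Qc (2 * m))) (x : Spinor (2 * m) m),
            g (τ a x) = ρ a (g x)) := by
  refine ⟨inferInstance, SpinorAux.simple τ hτ, SpinorAux.finrank_spinor m, ?_⟩
  intro N _ _ ρ _ hN
  exact SpinorAux.unique τ hτ ρ hN
end
end
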